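/- For any convex bodies K and C in ℝⁿ and any α, β > 0, the function x ↦ |αK ∩ (x+βC)|^{1/n} is concave on the set αK − βC (Minkowski difference body αK + (−βC)). -/

import Mathlib

open MeasureTheory Pointwise

theorem bm1_compact {K L D : Set ℝ} (hK : IsCompact K) (hL : IsCompact L) (hKn : K.Nonempty)
    (hLn : L.Nonempty) (h : ∀ x ∈ K, ∀ y ∈ L, x + y ∈ D) :
    volume K + volume L ≤ volume D := by
  obtain ⟨a, ha, hamax⟩ := hK.exists_isGreatest hKn
  obtain ⟨b, hb, hbmin⟩ := hL.exists_isLeast hLn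
  have h1 : volume ((fun x => x + b) '' K) = volume K := by simp
  have h2 : volume ((fun x => a + x) '' L) = volume L := by simp
  have hm : MeasurableSet ((fun x => a + x) '' L) :=
    (hL.image (by fun_prop)).measurableSet
  have hdis : volume (((fun x => x + b) '' K) ∩ ((fun x => a + x) '' L)) = 0 := by
    apply measure_mono_null (t := {a + b}) _ (by simp)
    rintro _ ⟨⟨x, hx, rfl⟩, y, hy, hxy⟩
    have := hamax hx
    have := hbmin hy
    simp only [Set.mem_singleton_iff] at *
    linarith
  rw [← h1, ← h2, ← measure_union_add_inter _ hm, hdis, add_zero]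
  apply measure_mono
  rintro _ (⟨x, hx, rfl⟩ | ⟨y, hy, rfl⟩)
  · exact h _ hx _ hb
  · exact h _ ha _ hy

theorem bm1_half {A L D : Set ℝ} (hA : MeasurableSet A) (hL : IsCompact L) (hAn : A.Nonempty)
    (hLn : L.Nonempty) (h : ∀ x ∈ A, ∀ y ∈ L, x + y ∈ D) :
    volume A + volume L ≤ volume D := by
  obtain ⟨a, ha⟩ := hAn
  have hfin : volume L ≠ ⊤ := hL.measure_lt_top.ne
  have h0 : ∀ K ⊆ A, IsCompact K → volume K + volume L ≤ volume D := by
    intro K hKA hK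
    refine le_trans (by gcongr; exact Set.subset_insert a K) (bm1_compact (hK.insert a) hL ⟨a, by simp⟩ hLn ?_)
    rintro x (rfl | hx) y hy
    · exact h _ ha _ hy
    · exact h _ (hKA hx) _ hy
  have : volume A ≤ volume D - volume L := by
    apply le_of_forall_lt
    intro r hr
    obtain ⟨K, hKA, hK, hrK⟩ := hA.exists_lt_isCompact hr
    exact hrK.trans_le (ENNReal.le_sub_of_add_le_right hfin (h0 K hKA hK))
  calc volume A + volume L ≤ (volume D - volume L) + volume L := by gcongr
    _ = volume D := tsub_add_cancel_of_le (le_trans (by simp) (h0 ∅ (by simp) isCompact_empty))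

theorem bm1 {A B D : Set ℝ} (hA : MeasurableSet A) (hB : MeasurableSet B) (hAn : A.Nonempty)
    (hBn : B.Nonempty) (h : ∀ x ∈ A, ∀ y ∈ B, x + y ∈ D) :
    volume A + volume B ≤ volume D := by
  obtain ⟨b, hb⟩ := hBn
  have h0 : ∀ K ⊆ B, IsCompact K → volume A + volume K ≤ volume D := by
    intro K hKA hK
    refine le_trans (by gcongr; exact Set.subset_insert b K) (bm1_half hA (hK.insert b) hAn ⟨b, by simp⟩ ?_)
    rintro x hx y (rfl | hy)
    · exact h _ hx _ hb
    · exact h _ hx _ (hKA hy)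
  have hAD : volume A ≤ volume D := le_trans (by simp) (h0 ∅ (by simp) isCompact_empty)
  by_cases hfin : volume A = ⊤
  · rw [hfin, top_le_iff] at hAD
    simp [hAD]
  have : volume B ≤ volume D - volume A := by
    apply le_of_forall_lt
    intro r hr
    obtain ⟨K, hKA, hK, hrK⟩ := hB.exists_lt_isCompact hr
    exact hrK.trans_le (ENNReal.le_sub_of_add_le_left hfin (h0 K hKA hK))
  calc volume A + volume B ≤ volume A + (volume D - volume A) := by gcongr
    _ = volume D := add_tsub_cancel_of_le hAD

theorem bm1_w {A B D : Set ℝ} {t s : ℝ} (ht : 0 < t) (hs : 0 < s)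
    (hA : MeasurableSet A) (hB : MeasurableSet B) (hAn : A.Nonempty)
    (hBn : B.Nonempty) (h : ∀ x ∈ A, ∀ y ∈ B, t * x + s * y ∈ D) :
    ENNReal.ofReal t * volume A + ENNReal.ofReal s * volume B ≤ volume D := by
  have := bm1 (A := t • A) (B := s • B) (D := D) (hA.const_smul_of_ne_zero ht.ne')
    (hB.const_smul_of_ne_zero hs.ne') hAn.smul_set hBn.smul_set ?_
  · simpa [Measure.addHaar_smul, abs_of_pos, ht, hs] using this
  · rintro _ ⟨x, hx, rfl⟩ _ ⟨y, hy, rfl⟩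
    exact h x hx y hy


theorem amgm_enn {t s : ℝ} (ht : 0 < t) (hs : 0 < s) (hts : t + s = 1) (x y : ENNReal) :
    x ^ t * y ^ s ≤ ENNReal.ofReal t * x + ENNReal.ofReal s * y := by
  by_cases hx : x = ⊤
  · subst hx; simp [ENNReal.mul_top, ht]
  by_cases hy : y = ⊤
  · subst hy; simp [ENNReal.mul_top, hs]
  lift x to NNReal using hx
  lift y to NNReal using hy
  have h := Real.geom_mean_le_arith_mean2_weighted ht.le hs.le x.2 y.2 hts
  have h2 := ENNReal.ofReal_le_ofReal h
  rw [ENNReal.ofReal_mul (Real.rpow_nonneg x.2 _), ENNReal.ofReal_add (mul_nonneg ht.le x.2) (mul_nonneg hs.le y.2), ENNReal.ofReal_mul ht.le,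
    ENNReal.ofReal_mul hs.le, ← ENNReal.ofReal_rpow_of_nonneg x.2 ht.le,
    ← ENNReal.ofReal_rpow_of_nonneg y.2 hs.le] at h2
  simpa using h2

theorem layer_enn {f : ℝ → ENNReal} (hf : Measurable f) (hfin : ∀ x, f x ≠ ⊤) :
    ∫⁻ x, f x = ∫⁻ l in Set.Ioi (0:ℝ), volume {x | ENNReal.ofReal l < f x} := by
  have := lintegral_eq_lintegral_meas_lt (f := fun x => (f x).toReal) volume
    (Filter.Eventually.of_forall fun x => ENNReal.toReal_nonneg) hf.ennreal_toReal.aemeasurable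
  simp only [ENNReal.ofReal_toReal (hfin _)] at this
  rw [this]
  apply setLIntegral_congr_fun measurableSet_Ioi
  intro l hl
  simp only [ENNReal.ofReal_lt_iff_lt_toReal (le_of_lt hl) (hfin _)]

theorem pl1_norm {t s : ℝ} (ht : 0 < t) (hs : 0 < s) (hts : t + s = 1) {f g h : ℝ → ENNReal}
    (hf : Measurable f) (hg : Measurable g) (hh : Measurable h)
    (hf1 : ⨆ x, f x = 1) (hg1 : ⨆ x, g x = 1)
    (H : ∀ x y, f x ^ t * g y ^ s ≤ h (t * x + s * y)) :
    (∫⁻ x, f x) ^ t * (∫⁻ x, g x) ^ s ≤ ∫⁻ x, h x := by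
  refine (amgm_enn ht hs hts _ _).trans ?_
  have hfle : ∀ x, f x ≤ 1 := fun x => hf1 ▸ le_iSup f x
  have hgle : ∀ x, g x ≤ 1 := fun x => hg1 ▸ le_iSup g x
  have hanti : ∀ f : ℝ → ENNReal, Measurable fun l : ℝ => volume {x | ENNReal.ofReal l < f x} := by
    intro f
    apply Antitone.measurable
    intro a b hab
    apply measure_mono
    intro x hx
    exact lt_of_le_of_lt (ENNReal.ofReal_le_ofReal hab) hx
  have hle : ∫⁻ x, min (h x) 1 ≤ ∫⁻ x, h x := lintegral_mono fun x => min_le_left _ _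
  refine le_trans ?_ hle
  rw [layer_enn hf fun x => ne_top_of_le_ne_top ENNReal.one_ne_top (hfle x),
    layer_enn hg fun x => ne_top_of_le_ne_top ENNReal.one_ne_top (hgle x),
    layer_enn (hh.min measurable_const) fun x => ne_top_of_le_ne_top ENNReal.one_ne_top (min_le_right _ _),
    ← lintegral_const_mul' _ _ ENNReal.ofReal_ne_top,
    ← lintegral_const_mul' _ _ ENNReal.ofReal_ne_top,
    ← lintegral_add_left ((hanti f).const_mul _)]
  apply setLIntegral_mono' measurableSet_Ioi
  intro l hl
  have hl0 : (0:ℝ) < l := hl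
  by_cases hl1 : l < 1
  · have hl1' : ENNReal.ofReal l < 1 := by simpa using hl1
    apply bm1_w ht hs (measurableSet_lt measurable_const hf) (measurableSet_lt measurable_const hg)
    · obtain ⟨x, hx⟩ := lt_iSup_iff.1 (hf1 ▸ hl1')
      exact ⟨x, hx⟩
    · obtain ⟨x, hx⟩ := lt_iSup_iff.1 (hg1 ▸ hl1')
      exact ⟨x, hx⟩
    · intro x hx y hy
      refine lt_min (lt_of_lt_of_le ?_ (H x y)) hl1'
      have : ENNReal.ofReal l = ENNReal.ofReal l ^ t * ENNReal.ofReal l ^ s := by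
        rw [← ENNReal.rpow_add _ _ (by simpa using hl0) ENNReal.ofReal_ne_top, hts,
          ENNReal.rpow_one]
      rw [this]
      exact ENNReal.mul_lt_mul (ENNReal.rpow_lt_rpow hx ht) (ENNReal.rpow_lt_rpow hy hs)
  · have hl1' : 1 ≤ ENNReal.ofReal l := by simpa using hl1
    have e1 : {x | ENNReal.ofReal l < f x} = ∅ := by
      ext x; simpa using (hfle x).trans hl1'
    have e2 : {x | ENNReal.ofReal l < g x} = ∅ := by
      ext x; simpa using (hgle x).trans hl1'
    simp [e1, e2]

theorem pl1_bdd {t s : ℝ} (ht : 0 < t) (hs : 0 < s) (hts : t + s = 1) {f g h : ℝ → ENNReal}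
    (hf : Measurable f) (hg : Measurable g) (hh : Measurable h)
    (hf1 : ⨆ x, f x ≠ ⊤) (hg1 : ⨆ x, g x ≠ ⊤)
    (H : ∀ x y, f x ^ t * g y ^ s ≤ h (t * x + s * y)) :
    (∫⁻ x, f x) ^ t * (∫⁻ x, g x) ^ s ≤ ∫⁻ x, h x := by
  set a := ⨆ x, f x with ha
  set b := ⨆ x, g x with hb
  by_cases ha0 : a = 0
  · have : ∀ x, f x = 0 := by simpa [ha, ENNReal.iSup_eq_zero] using ha0
    simp [this, ht]
  by_cases hb0 : b = 0
  · have : ∀ x, g x = 0 := by simpa [hb, ENNReal.iSup_eq_zero] using hb0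
    simp [this, hs]
  have hc0 : a ^ t * b ^ s ≠ 0 := by
    simp [ENNReal.rpow_eq_zero_iff, ha0, hb0, hf1, hg1]
  have hct : a ^ t * b ^ s ≠ ⊤ := 
    ENNReal.mul_ne_top (ENNReal.rpow_ne_top_of_nonneg ht.le hf1) (ENNReal.rpow_ne_top_of_nonneg hs.le hg1)
  have key : ∀ u v : ENNReal, (a⁻¹ * u) ^ t * (b⁻¹ * v) ^ s = (a ^ t * b ^ s)⁻¹ * (u ^ t * v ^ s) := by
    intro u v
    rw [ENNReal.mul_rpow_of_nonneg _ _ ht.le, ENNReal.mul_rpow_of_nonneg _ _ hs.le,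
      ENNReal.inv_rpow, ENNReal.inv_rpow, ENNReal.mul_inv]
    · ring
    · right; exact ENNReal.rpow_ne_top_of_nonneg hs.le hg1
    · left; exact ENNReal.rpow_ne_top_of_nonneg ht.le hf1
  have := pl1_norm ht hs hts (hf.const_mul a⁻¹) (hg.const_mul b⁻¹) (hh.const_mul (a ^ t * b ^ s)⁻¹)
    (by rw [← ENNReal.mul_iSup, ← ha, ENNReal.inv_mul_cancel ha0 hf1])
    (by rw [← ENNReal.mul_iSup, ← hb, ENNReal.inv_mul_cancel hb0 hg1])
    (by intro x y; rw [key]; gcongr; exact H x y)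
  rw [lintegral_const_mul _ hf, lintegral_const_mul _ hg, lintegral_const_mul _ hh, key] at this
  exact (ENNReal.mul_le_mul_iff_right (ENNReal.inv_ne_zero.2 hct) (ENNReal.inv_ne_top.2 hc0)).1 this

/-- Prékopa–Leindler property. -/
def PLprop (t s : ℝ) (E : Type) [AddCommGroup E] [Module ℝ E] [MeasureSpace E] : Prop :=
  ∀ f g h : E → ENNReal, Measurable f → Measurable g → Measurable h →
    (∀ x y, f x ^ t * g y ^ s ≤ h (t • x + s • y)) →
    (∫⁻ x, f x) ^ t * (∫⁻ x, g x) ^ s ≤ ∫⁻ x, h x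

theorem trunc_tendsto {f : ℝ → ENNReal} (hf : Measurable f) :
    Filter.Tendsto (fun n : ℕ => ∫⁻ x, min (f x) n) Filter.atTop (nhds (∫⁻ x, f x)) := by
  apply lintegral_tendsto_of_tendsto_of_monotone
  · intro n; exact (hf.min measurable_const).aemeasurable
  · refine Filter.Eventually.of_forall fun x m n hmn => ?_
    exact min_le_min_left _ (by exact_mod_cast hmn)
  · refine Filter.Eventually.of_forall fun x => ?_
    have := (tendsto_const_nhds (x := f x)).min ENNReal.tendsto_nat_nhds_top
    simpa using this

theorem pl1 {t s : ℝ} (ht : 0 < t) (hs : 0 < s) (hts : t + s = 1) : PLprop t s ℝ := by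
  intro f g h hf hg hh H
  by_cases hF : ∫⁻ x, f x = 0
  · simp [hF, ht]
  by_cases hG : ∫⁻ x, g x = 0
  · simp [hG, hs]
  have T := ENNReal.Tendsto.mul ((trunc_tendsto hf).ennrpow_const t)
    (by left; simp [ENNReal.rpow_eq_zero_iff, hF, ht.le]) ((trunc_tendsto hg).ennrpow_const s)
    (by left; simp [ENNReal.rpow_eq_zero_iff, hG, hs.le])
  refine le_of_tendsto' T fun n => ?_
  apply pl1_bdd ht hs hts (hf.min measurable_const) (hg.min measurable_const) hh
  · exact ne_top_of_le_ne_top (ENNReal.natCast_ne_top n) (iSup_le fun x => min_le_right _ _)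
  · exact ne_top_of_le_ne_top (ENNReal.natCast_ne_top n) (iSup_le fun x => min_le_right _ _)
  · intro x y
    refine le_trans ?_ (H x y)
    gcongr <;> exact min_le_left _ _

theorem PLprop.prod {t s : ℝ} {E F : Type} [AddCommGroup E] [Module ℝ E] [MeasureSpace E]
    [AddCommGroup F] [Module ℝ F] [MeasureSpace F] [SFinite (volume : Measure F)]
    (hE : PLprop t s E) (hF : PLprop t s F) : PLprop t s (E × F) := by
  intro f g h hf hg hh H
  rw [Measure.volume_eq_prod, lintegral_prod _ hf.aemeasurable, lintegral_prod _ hg.aemeasurable,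
    lintegral_prod _ hh.aemeasurable]
  apply hE _ _ _ hf.lintegral_prod_right' hg.lintegral_prod_right' hh.lintegral_prod_right'
  intro x y
  apply hF _ _ _ (hf.comp measurable_prodMk_left) (hg.comp measurable_prodMk_left)
    (hh.comp measurable_prodMk_left)
  intro u v
  exact H (x, u) (y, v)

theorem PLprop.congr {t s : ℝ} {E F : Type} [AddCommGroup E] [Module ℝ E] [MeasureSpace E]
    [AddCommGroup F] [Module ℝ F] [MeasureSpace F] (hE : PLprop t s E) (e : E → F)
    (he : MeasurePreserving e) (hlin : ∀ x y, e (t • x + s • y) = t • e x + s • e y) :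
    PLprop t s F := by
  intro f g h hf hg hh H
  rw [← he.lintegral_comp hf, ← he.lintegral_comp hg, ← he.lintegral_comp hh]
  apply hE _ _ _ (hf.comp he.measurable) (hg.comp he.measurable) (hh.comp he.measurable)
  intro x y
  simp only [Function.comp]
  rw [hlin]
  exact H _ _

theorem pl_pi {t s : ℝ} (ht : 0 < t) (hs : 0 < s) (hts : t + s = 1) (n : ℕ) :
    PLprop t s (Fin n → ℝ) := by
  induction n with
  | zero =>
    intro f g h hf hg hh H
    rw [volume_pi, Measure.pi_of_empty _ 0]
    simp only [lintegral_dirac]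
    refine (H 0 0).trans (le_of_eq ?_)
    congr 1
    exact Subsingleton.elim _ _
  | succ n ih =>
    have h := (volume_preserving_piFinSuccAbove (fun _ : Fin (n+1) => ℝ) 0).symm
    refine PLprop.congr ((pl1 ht hs hts).prod ih) _ h ?_
    intro x y
    rw [MeasurableEquiv.symm_apply_eq]
    rw [Prod.ext_iff]
    constructor
    · simp [MeasurableEquiv.piFinSuccAbove]
    · funext i
      simp [MeasurableEquiv.piFinSuccAbove, Fin.tail, Fin.consEquiv]

theorem pl_euc {t s : ℝ} (ht : 0 < t) (hs : 0 < s) (hts : t + s = 1) (n : ℕ) :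
    PLprop t s (EuclideanSpace ℝ (Fin n)) :=
  (pl_pi ht hs hts n).congr _ (PiLp.volume_preserving_toLp (Fin n)) (fun x y => by simp)

theorem bm_pos {t s : ℝ} (ht : 0 < t) (hs : 0 < s) {n : ℕ} 
    {A B D : Set (EuclideanSpace ℝ (Fin n))} (hA : MeasurableSet A) (hB : MeasurableSet B)
    (hD : MeasurableSet D) (hDf : volume D ≠ ⊤) {a b : ℝ} (ha : 0 < a) (hb : 0 < b)
    (hAv : volume A = ENNReal.ofReal (a ^ n)) (hBv : volume B = ENNReal.ofReal (b ^ n))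
    (h : ∀ x ∈ A, ∀ y ∈ B, t • x + s • y ∈ D) :
    (t * a + s * b) ^ n ≤ (volume D).toReal := by
  set c := t * a + s * b with hc
  have hc0 : 0 < c := by positivity
  have hm : ∀ r : ℝ, Measurable fun x : EuclideanSpace ℝ (Fin n) => r • x := 
    fun r => measurable_const_smul r
  have P := pl_euc (t := t * a / c) (s := s * b / c) (by positivity) (by positivity)
    (by field_simp; exact hc.symm) n (((fun x => a • x) ⁻¹' A).indicator 1)
    (((fun x => b • x) ⁻¹' B).indicator 1) (((fun x => c • x) ⁻¹' D).indicator 1)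
    (measurable_one.indicator (hm a hA)) (measurable_one.indicator (hm b hB))
    (measurable_one.indicator (hm c hD)) ?_
  · rw [lintegral_indicator_one (hm a hA), lintegral_indicator_one (hm b hB),
      lintegral_indicator_one (hm c hD), Measure.addHaar_preimage_smul _ ha.ne',
      Measure.addHaar_preimage_smul _ hb.ne', Measure.addHaar_preimage_smul _ hc0.ne', hAv, hBv,
      ← ENNReal.ofReal_mul (by positivity), ← ENNReal.ofReal_mul (by positivity)] at P
    simp only [finrank_euclideanSpace, Fintype.card_fin] at P
    rw [abs_of_pos (by positivity), abs_of_pos (by positivity), abs_of_pos (by positivity),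
      inv_mul_cancel₀ (by positivity), inv_mul_cancel₀ (by positivity)] at P
    simp only [ENNReal.ofReal_one, ENNReal.one_rpow, mul_one] at P
    rw [← ENNReal.ofReal_toReal hDf, ← ENNReal.ofReal_mul (by positivity),
      ENNReal.one_le_ofReal] at P
    rw [inv_mul_eq_div, one_le_div (by positivity)] at P
    exact P
  · intro x y
    by_cases hx : a • x ∈ A
    · by_cases hy : b • y ∈ B
      · have : c • ((t * a / c) • x + (s * b / c) • y) ∈ D := by
          convert h _ hx _ hy using 1
          rw [smul_add, smul_smul, smul_smul, smul_smul, smul_smul]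
          congr 2 <;> field_simp
        rw [Set.indicator_of_mem (show x ∈ (fun x => a • x) ⁻¹' A from hx), Set.indicator_of_mem (show y ∈ (fun x => b • x) ⁻¹' B from hy), Set.indicator_of_mem (show _ ∈ (fun x => c • x) ⁻¹' D from this)]
        simp
      · rw [Set.indicator_of_notMem (a := y) (by exact hy), ENNReal.zero_rpow_of_pos (by positivity)]
        simp
    · rw [Set.indicator_of_notMem (a := x) (by exact hx), ENNReal.zero_rpow_of_pos (by positivity)]
      simp

theorem bm_zero {s : ℝ} (hs : 0 < s) {n : ℕ} {B D : Set (EuclideanSpace ℝ (Fin n))}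
    (hDf : volume D ≠ ⊤) (v : EuclideanSpace ℝ (Fin n)) (h : ∀ y ∈ B, v + s • y ∈ D) :
    s ^ n * (volume B).toReal ≤ (volume D).toReal := by
  have h1 : volume ((fun x => v + x) '' (s • B)) ≤ volume D := by
    apply measure_mono
    rintro _ ⟨_, ⟨y, hy, rfl⟩, rfl⟩
    exact h y hy
  rw [Set.image_add_left, measure_preimage_add, Measure.addHaar_smul] at h1
  have := ENNReal.toReal_mono hDf h1
  have hsn : 0 ≤ s ^ n := by positivity
  simpa [abs_of_pos hs, ENNReal.toReal_ofReal hsn] using this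

theorem bm {t s : ℝ} (ht : 0 < t) (hs : 0 < s) {n : ℕ} (hn : 1 ≤ n)
    {A B D : Set (EuclideanSpace ℝ (Fin n))} (hA : MeasurableSet A) (hB : MeasurableSet B)
    (hD : MeasurableSet D) (hAf : volume A ≠ ⊤) (hBf : volume B ≠ ⊤) (hDf : volume D ≠ ⊤)
    (hAn : A.Nonempty) (hBn : B.Nonempty)
    (h : ∀ x ∈ A, ∀ y ∈ B, t • x + s • y ∈ D) :
    t * (volume A).toReal ^ ((1:ℝ)/n) + s * (volume B).toReal ^ ((1:ℝ)/n)
      ≤ (volume D).toReal ^ ((1:ℝ)/n) := by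
  have hn0 : n ≠ 0 := by omega
  have hpow : ∀ x : ℝ, 0 ≤ x → (x ^ ((1:ℝ)/n)) ^ n = x := fun x hx => by
    rw [one_div, Real.rpow_inv_natCast_pow hx hn0]
  have hpos : ∀ x : ℝ, 0 ≤ x → 0 ≤ x ^ ((1:ℝ)/n) := fun x hx => Real.rpow_nonneg hx _
  have hz : (0:ℝ) ^ ((1:ℝ)/n) = 0 := Real.zero_rpow (by positivity)
  set p := (volume A).toReal with hp
  set q := (volume B).toReal with hq
  have hp0 : 0 ≤ p := ENNReal.toReal_nonneg
  have hq0 : 0 ≤ q := ENNReal.toReal_nonneg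
  apply le_of_pow_le_pow_left₀ hn0 (hpos _ ENNReal.toReal_nonneg)
  rw [hpow _ ENNReal.toReal_nonneg]
  rcases hp0.eq_or_lt with hp' | hp'
  · obtain ⟨x, hx⟩ := hAn
    rw [← hp', hz, mul_zero, zero_add, mul_pow, hpow _ hq0]
    exact bm_zero hs hDf (t • x) fun y hy => h x hx y hy
  rcases hq0.eq_or_lt with hq' | hq'
  · obtain ⟨y, hy⟩ := hBn
    rw [← hq', hz, mul_zero, add_zero, mul_pow, hpow _ hp0]
    exact bm_zero ht hDf (s • y) fun x hx => by rw [add_comm]; exact h x hx y hy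
  refine bm_pos ht hs hA hB hD hDf (Real.rpow_pos_of_pos hp' _) (Real.rpow_pos_of_pos hq' _) ?_ ?_ h
  · rw [hpow _ hp0, hp, ENNReal.ofReal_toReal hAf]
  · rw [hpow _ hq0, hq, ENNReal.ofReal_toReal hBf]

/-- For convex bodies `K` and `C` in `ℝⁿ` and `α, β > 0`, the function
`x ↦ |αK ∩ (x+βC)|^(1/n)` is concave on the Minkowski difference body `αK − βC`. -/
theorem concaveOn_vol_inter_rpow {n : ℕ} (hn : 1 ≤ n)
    (K C : Set (EuclideanSpace ℝ (Fin n))) (α β : ℝ) (hα : 0 < α) (hβ : 0 < β)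
    (hKcomp : IsCompact K) (hKconv : Convex ℝ K) (hKint : (interior K).Nonempty)
    (hCcomp : IsCompact C) (hCconv : Convex ℝ C) (hCint : (interior C).Nonempty) :
    ConcaveOn ℝ (α • K - β • C)
      (fun x => (volume ((α • K) ∩ ({x} + β • C))).toReal ^ ((1:ℝ)/(n:ℝ))) := by
  have cK : Convex ℝ (α • K) := hKconv.smul α
  have cC : Convex ℝ (β • C) := hCconv.smul β
  have kK : IsCompact (α • K) := hKcomp.smul α
  have kC : IsCompact (β • C) := hCcomp.smul β
  have kI : ∀ x, IsCompact ((α • K) ∩ ({x} + β • C)) := fun x =>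
    kK.inter (isCompact_singleton.add kC)
  have ne : ∀ x ∈ α • K - β • C, ((α • K) ∩ ({x} + β • C)).Nonempty := by
    rintro _ ⟨y, hy, z, hz, rfl⟩
    exact ⟨y, hy, Set.mem_add.2 ⟨_, rfl, z, hz, by simp⟩⟩
  rw [concaveOn_iff_forall_pos]
  refine ⟨cK.sub cC, ?_⟩
  intro x hx y hy t s ht hs hts
  simp only [smul_eq_mul]
  refine bm ht hs hn (kI _).measurableSet (kI _).measurableSet (kI _).measurableSet
    (kI _).measure_lt_top.ne (kI _).measure_lt_top.ne (kI _).measure_lt_top.ne (ne x hx) (ne y hy) ?_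
  rintro u ⟨hu, hu'⟩ v ⟨hv, hv'⟩
  refine ⟨cK hu hv ht.le hs.le hts, ?_⟩
  obtain ⟨_, rfl, p, hp, rfl⟩ := Set.mem_add.1 hu'
  obtain ⟨_, rfl, q, hq, rfl⟩ := Set.mem_add.1 hv'
  refine Set.mem_add.2 ⟨_, rfl, t • p + s • q, cC hp hq ht.le hs.le hts, ?_⟩
  module
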